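/- Let ρ be an irreducible finite-dimensional complex representation of SL(2, ℤ/8ℤ) that does not factor through the reduction homomorphism SL(2, ℤ/8ℤ) → SL(2, ℤ/4ℤ). If ρ(t) has exactly two distinct eigenvalues, then ρ is two-dimensional and the eigenvalue set of ρ(t) is one of {ζ₈, ζ₈³}, {ζ₈, ζ₈⁷}, {ζ₈³, ζ₈⁵}, {ζ₈⁵, ζ₈⁷}. -/

import Mathlib

/-- The group `SL(2, ℤ/nℤ)`. -/
abbrev SL2 (n : ℕ) := Matrix.SpecialLinearGroup (Fin 2) (ZMod n)

/-- The element `t = [[1,1],[0,1]]` of `SL(2, ℤ/nℤ)`. -/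
def tGen (n : ℕ) : SL2 n := ⟨!![1, 1; 0, 1], by simp [Matrix.det_fin_two_of]⟩

/-- A representation is irreducible if the space is nonzero and the only invariant
subspaces are `⊥` and `⊤`. -/
def IsIrreducibleRep {G V : Type} [Group G] [AddCommGroup V] [Module ℂ V]
    (ρ : Representation ℂ G V) : Prop :=
  Nontrivial V ∧ ∀ p : Submodule ℂ V, (∀ g : G, p.map (ρ g) ≤ p) → p = ⊥ ∨ p = ⊤

/-- The primitive `m`-th root of unity `ζ_m = exp(2πi/m)`. -/
noncomputable def ζ (m : ℕ) : ℂ := Complex.exp (2 * Real.pi * Complex.I / m)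

/-- A representation is nontrivial if some group element acts nontrivially. -/
def IsNontrivialRep {G V : Type} [Group G] [AddCommGroup V] [Module ℂ V]
    (ρ : Representation ℂ G V) : Prop :=
  ∃ g : G, ρ g ≠ LinearMap.id

/-- Two representations are isomorphic if there is an equivariant linear equivalence. -/
def RepIso {G V W : Type} [Group G] [AddCommGroup V] [Module ℂ V]
    [AddCommGroup W] [Module ℂ W]
    (ρ : Representation ℂ G V) (ρ' : Representation ℂ G W) : Prop :=
  ∃ e : V ≃ₗ[ℂ] W, ∀ (g : G) (v : V), e (ρ g v) = ρ' g (e v)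

/-!
Let `u = [[1,0],[-1,1]]`, so that `t * u * t = u * t * u` and `t`, `u` generate `SL(2, ℤ/8ℤ)`. If
`ρ(t)` has two eigenvalues `a ≠ b`, then `ρ(t)` and its conjugate `ρ(u)` both satisfy a quadratic
equation, so an eigenvector `v` of `ρ(t)ρ(u)` spans together with `ρ(u)v` an invariant subspace,
and irreducibility forces dimension two. The element `w = t * u * t` interchanges `t` and `u`
under conjugation, so `ρ(w)²` is a scalar while `ρ(w)` is not. By Cayley-Hamilton
`ρ(w)² = -det ρ(w) = -(ab)³`, and `w⁴ = 1` gives `(ab)⁶ = 1`. Together with `t⁸ = 1` this leaves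
`ab = ±1`. Finally `a⁴ = 1` would force `b⁴ = 1`, hence `ρ(t)⁴ = 1`; but the normal closure of
`t⁴` is the kernel of reduction modulo `4`, so `ρ` would factor. Hence `a` is a primitive eighth
root of unity and `b = ±a⁻¹`.
-/

open Module Matrix.SpecialLinearGroup
open scoped MatrixGroups Polynomial

section SpecialLinear

variable {R S : Type*} [CommRing R] [CommRing S]

lemma transvection_pow {ι : Type*} [DecidableEq ι] [Fintype ι] {i j : ι} (hij : i ≠ j) (b : R)
    (k : ℕ) : transvection hij b ^ k = transvection hij (k * b) := by
  induction k with
  | zero => simp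
  | succ k ih => rw [pow_succ, ih, ← transvection_add, Nat.cast_succ, add_one_mul]

lemma coe_transvection_zero_one (b : R) :
    (transvection (zero_ne_one : (0 : Fin 2) ≠ 1) b : Matrix (Fin 2) (Fin 2) R) =
      !![1, b; 0, 1] := by
  ext i j; fin_cases i <;> fin_cases j <;> simp [transvection_coe]

lemma coe_transvection_one_zero (b : R) :
    (transvection (one_ne_zero : (1 : Fin 2) ≠ 0) b : Matrix (Fin 2) (Fin 2) R) =
      !![1, 0; b, 1] := by
  ext i j; fin_cases i <;> fin_cases j <;> simp [transvection_coe]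

lemma det_fin_two_eq_one (g : SL(2, R)) : g 0 0 * g 1 1 - g 0 1 * g 1 0 = 1 :=
  (Matrix.det_fin_two _).symm.trans g.det_coe

lemma exists_eq_transvection_mul_of_isUnit (g : SL(2, R)) (hc : IsUnit (g 1 0)) :
    ∃ x z : R, g = transvection zero_ne_one x * transvection one_ne_zero (g 1 0) *
      transvection zero_ne_one z := by
  obtain ⟨y, hy⟩ := hc.exists_right_inv
  refine ⟨(g 0 0 - 1) * y, (g 1 1 - 1) * y, ?_⟩
  have hdet := det_fin_two_eq_one g
  ext i j
  simp only [coe_mul, coe_transvection_zero_one, coe_transvection_one_zero]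
  fin_cases i <;> fin_cases j <;> simp
  · linear_combination (1 - g 0 0) * hy
  · linear_combination -y * hdet - (g 0 1 + (g 0 0 - 1) * (g 1 1 - 1) * y) * hy
  · linear_combination (1 - g 1 1) * hy

theorem submonoid_eq_top_of_transvection_mem [IsLocalRing R] (H : Submonoid SL(2, R))
    (hupper : ∀ b, transvection zero_ne_one b ∈ H) (hlower : ∀ b, transvection one_ne_zero b ∈ H) :
    H = ⊤ := by
  have mem_of_isUnit (g : SL(2, R)) (hc : IsUnit (g 1 0)) : g ∈ H := by
    obtain ⟨x, z, hg⟩ := exists_eq_transvection_mul_of_isUnit g hc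
    exact hg ▸ H.mul_mem (H.mul_mem (hupper x) (hlower _)) (hupper z)
  refine eq_top_iff.2 fun g _ ↦ ?_
  by_cases hc : IsUnit (g 1 0)
  · exact mem_of_isUnit g hc
  have ha : IsUnit (g 0 0) := by
    have hdet : IsUnit (g 0 0 * g 1 1 + -(g 0 1 * g 1 0)) := by
      rw [← sub_eq_add_neg, det_fin_two_eq_one]
      exact isUnit_one
    refine (IsLocalRing.isUnit_or_isUnit_of_isUnit_add hdet).elim isUnit_of_mul_isUnit_left
      fun h ↦ (hc (isUnit_of_mul_isUnit_right (neg_neg (g 0 1 * g 1 0) ▸ h.neg))).elim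
  set g' := transvection one_ne_zero 1 * g with hg'
  have hc' : g' 1 0 = g 0 0 + g 1 0 := by
    simp [hg', coe_transvection_one_zero, Matrix.mul_apply]
  have hunit : IsUnit (g' 1 0) := by
    have h : IsUnit (g' 1 0 + -g 1 0) := by rwa [hc', add_neg_cancel_right]
    exact (IsLocalRing.isUnit_or_isUnit_of_isUnit_add h).resolve_right
      fun h ↦ hc (neg_neg (g 1 0) ▸ h.neg)
  have hg : g = transvection one_ne_zero (-1) * g' := by
    rw [hg', ← transvection_inv, inv_mul_cancel_left]
  exact hg ▸ H.mul_mem (hlower _) (mem_of_isUnit g' hunit)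

theorem map_surjective_of_isLocalHom {n : Type*} [DecidableEq n] [Fintype n] (f : R →+* S)
    [IsLocalHom f] (hf : Function.Surjective f) :
    Function.Surjective (Matrix.SpecialLinearGroup.map (n := n) f) := by
  intro g
  suffices ∃ M : Matrix n n R, M.det = 1 ∧ f.mapMatrix M = g by
    obtain ⟨M, hdet, hM⟩ := this
    exact ⟨⟨M, hdet⟩, Subtype.ext hM⟩
  cases isEmpty_or_nonempty n with
  | inl _ => exact ⟨1, Matrix.det_one, Subsingleton.elim _ _⟩
  | inr h =>
    obtain ⟨i₀⟩ := h
    choose σ hσ using hf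
    set M : Matrix n n R := (g : Matrix n n S).map σ with hM
    have hfM : f.mapMatrix M = g := by ext; simp [hM, hσ]
    have hfdet : f M.det = 1 := by rw [RingHom.map_det, hfM, det_coe]
    obtain ⟨y, hy⟩ := (isUnit_of_map_unit f M.det (hfdet ▸ isUnit_one)).exists_left_inv
    have hfy : f y = 1 := by simpa [hfdet] using congrArg f hy
    refine ⟨M.updateRow i₀ (y • M i₀), ?_, ?_⟩
    · rw [Matrix.det_updateRow_smul, Matrix.updateRow_eq_self, hy]
    · rw [← hfM]
      ext i j
      obtain rfl | hi := eq_or_ne i i₀ <;> simp [*]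

lemma transvection_one_zero_mem {N : Subgroup SL(2, R)} [hN : N.Normal] {x : R}
    (hx : transvection zero_ne_one (-x) ∈ N) : transvection one_ne_zero x ∈ N := by
  let w : SL(2, R) :=
    transvection zero_ne_one 1 * transvection one_ne_zero (-1) * transvection zero_ne_one 1
  have hw : transvection one_ne_zero x * w = w * transvection zero_ne_one (-x) := by
    ext i j
    simp only [coe_mul, w, coe_transvection_zero_one, coe_transvection_one_zero]
    fin_cases i <;> fin_cases j <;> simp
  rw [← mul_inv_eq_iff_eq_mul.2 hw.symm]
  exact hN.conj_mem _ hx w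

theorem ker_map_le_of_transvection_mem (f : R →+* S) [IsLocalHom f] (N : Subgroup SL(2, R))
    [hN : N.Normal] (hupper : ∀ x, f x = 0 → transvection zero_ne_one x ∈ N) :
    (Matrix.SpecialLinearGroup.map f).ker ≤ N := by
  have hlower (x : R) (hx : f x = 0) : transvection one_ne_zero x ∈ N :=
    transvection_one_zero_mem (hupper _ (by simp [hx]))
  intro g hg
  have hentry (i j : Fin 2) : f (g i j) = (1 : SL(2, S)) i j := congr($(hg) i j)
  have hfa : f (g 0 0) = 1 := by simpa using hentry 0 0
  have hfb : f (g 0 1) = 0 := by simpa using hentry 0 1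
  have hfc : f (g 1 0) = 0 := by simpa using hentry 1 0
  obtain ⟨y, hy⟩ := (isUnit_of_map_unit f (g 0 0) (hfa ▸ isUnit_one)).exists_right_inv
  have hdet := det_fin_two_eq_one g
  -- The conjugate in the middle has the same upper left entry as `g`, a unit: the outer
  -- transvections only adjust the first row and the first column.
  have hdecomp : g = transvection one_ne_zero ((g 1 0 - g 0 0 + 1) * y) *
      (transvection one_ne_zero 1 * transvection zero_ne_one (1 - g 0 0) *
        (transvection one_ne_zero 1)⁻¹) *
      transvection zero_ne_one ((g 0 1 + g 0 0 - 1) * y) := by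
    ext i j
    simp only [transvection_inv, coe_mul, coe_transvection_zero_one, coe_transvection_one_zero]
    fin_cases i <;> fin_cases j <;> simp
    · linear_combination -(g 0 1 + g 0 0 - 1) * hy
    · linear_combination -(g 1 0 - g 0 0 + 1) * hy
    · linear_combination y * hdet -
        (g 1 1 + g 0 0 - 2 + (g 1 0 - g 0 0 + 1) * (g 0 1 + g 0 0 - 1) * y) * hy
  rw [hdecomp]
  exact N.mul_mem (N.mul_mem (hlower _ (by simp [hfa, hfc]))
    (hN.conj_mem _ (hupper _ (by simp [hfa])) _)) (hupper _ (by simp [hfa, hfb]))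

end SpecialLinear

section ZModGroup

variable (n : ℕ)

/-- The lower unipotent `[[1,0],[-1,1]]` of `SL(2, ℤ/nℤ)`, the second standard generator: it
satisfies the braid relation `t * u * t = u * t * u` with `t = tGen n`. -/
def uGen : SL2 n := transvection one_ne_zero (-1)

lemma tGen_eq_transvection : tGen n = transvection zero_ne_one 1 := by
  ext i j
  rw [coe_transvection_zero_one]
  rfl

lemma tGen_pow (k : ℕ) : tGen n ^ k = transvection zero_ne_one (k : ZMod n) := by
  rw [tGen_eq_transvection, transvection_pow, mul_one]

lemma uGen_pow (k : ℕ) : uGen n ^ k = transvection one_ne_zero (-k : ZMod n) := by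
  rw [uGen, transvection_pow, mul_neg_one]

lemma tGen_pow_self : tGen n ^ n = 1 := by
  rw [tGen_pow, CharP.cast_eq_zero, transvection_coeff_zero]

lemma tGen_braid_uGen : tGen n * uGen n * tGen n = uGen n * tGen n * uGen n := by
  ext i j
  simp only [tGen_eq_transvection, uGen, coe_mul, coe_transvection_zero_one,
    coe_transvection_one_zero]
  fin_cases i <;> fin_cases j <;> simp

lemma tGen_mul_uGen_mul_tGen_pow_four : (tGen n * uGen n * tGen n) ^ 4 = 1 := by
  have hsq : (tGen n * uGen n * tGen n) ^ 2 = -1 := by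
    ext i j
    simp only [tGen_eq_transvection, uGen, pow_two, coe_mul, coe_transvection_zero_one,
      coe_transvection_one_zero]
    fin_cases i <;> fin_cases j <;> simp
  rw [show 4 = 2 * 2 from rfl, pow_mul, hsq, neg_one_sq]

theorem closure_tGen_uGen [NeZero n] [IsLocalRing (ZMod n)] :
    Submonoid.closure {tGen n, uGen n} = ⊤ := by
  apply submonoid_eq_top_of_transvection_mem
  · intro b
    obtain ⟨k, rfl⟩ := ZMod.natCast_zmod_surjective b
    exact tGen_pow n k ▸ pow_mem (Submonoid.subset_closure (.inl rfl)) k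
  · intro b
    obtain ⟨k, hk⟩ := ZMod.natCast_zmod_surjective (-b)
    rw [← neg_neg b, ← hk, ← uGen_pow]
    exact pow_mem (Submonoid.subset_closure (.inr rfl)) k

lemma isLocalRing_zmod_prime_pow (p k : ℕ) [Fact p.Prime] [NeZero k] :
    IsLocalRing (ZMod (p ^ k)) :=
  have : Fact (1 < p ^ k) := ⟨Nat.one_lt_pow (NeZero.ne k) (Fact.out : p.Prime).one_lt⟩
  .of_surjective' (PadicInt.toZModPow k) (ZMod.ringHom_surjective _)

lemma exists_eq_comp_of_ker_le {G H M : Type*} [Group G] [Group H] [Monoid M] (π : G →* H)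
    (hπ : Function.Surjective π) (φ : G →* M) (hker : π.ker ≤ φ.ker) :
    ∃ ψ : H →* M, φ = ψ.comp π :=
  ⟨(QuotientGroup.lift π.ker φ hker).comp
    (QuotientGroup.quotientKerEquivOfSurjective π hπ).symm.toMonoidHom, by
      ext g
      have hg : (QuotientGroup.quotientKerEquivOfSurjective π hπ).symm (π g) = (g : G ⧸ π.ker) :=
        (MulEquiv.symm_apply_eq _).2 rfl
      simp [hg]⟩

theorem exists_eq_comp_map_castHom {m n : ℕ} [NeZero n] [IsLocalRing (ZMod n)] (hm : m ≠ 1)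
    (hmn : m ∣ n) {M : Type*} [Monoid M] (φ : SL2 n →* M) (ht : φ (tGen n) ^ m = 1) :
    ∃ ψ : SL2 m →* M, φ = ψ.comp (Matrix.SpecialLinearGroup.map (ZMod.castHom hmn (ZMod m))) := by
  have := ZMod.nontrivial_iff.2 hm
  apply exists_eq_comp_of_ker_le
  · exact map_surjective_of_isLocalHom _ (ZMod.castHom_surjective hmn)
  · refine ker_map_le_of_transvection_mem _ _ fun x hx ↦ ?_
    obtain ⟨k, rfl⟩ := ZMod.natCast_zmod_surjective x
    rw [map_natCast, ZMod.natCast_eq_zero_iff] at hx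
    obtain ⟨l, rfl⟩ := hx
    rw [← tGen_pow, pow_mul, MonoidHom.mem_ker, map_pow, map_pow, ht, one_pow]

end ZModGroup

section LinearAlgebra

open Polynomial

variable {K V : Type*} [Field K] [AddCommGroup V] [Module K V]

lemma aeval_eq_of_monic_of_natDegree_eq_two {R A : Type*} [CommRing R] [Ring A] [Algebra R A]
    {p : R[X]} (hp : p.Monic) (hdeg : p.natDegree = 2) (a : A) :
    aeval a p = a ^ 2 + p.coeff 1 • a + p.coeff 0 • 1 := by
  have hlead : p.coeff 2 = 1 := hdeg ▸ hp
  rw [aeval_eq_sum_range, hdeg]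
  simp only [Finset.sum_range_succ, Finset.sum_range_zero, hlead, pow_zero, pow_one, one_smul]
  abel

lemma sq_eq_of_natDegree_minpoly_eq_two {A : Type*} [Ring A] [Algebra K A] {a : A}
    (ha : (minpoly K a).natDegree = 2) :
    a ^ 2 = -(minpoly K a).coeff 1 • a + -(minpoly K a).coeff 0 • 1 := by
  have hint : IsIntegral K a := minpoly.ne_zero_iff.1 (ne_zero_of_natDegree_gt (ha ▸ two_pos))
  have h := aeval_eq_of_monic_of_natDegree_eq_two (minpoly.monic hint) ha a
  rw [minpoly.aeval, add_assoc] at h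
  rw [neg_smul, neg_smul, ← neg_add]
  exact eq_neg_of_add_eq_zero_left h.symm

lemma minpoly_separable_of_pow_eq_one {A : Type*} [Ring A] [Algebra K A] {a : A} {n : ℕ}
    (hn : (n : K) ≠ 0) (ha : a ^ n = 1) : (minpoly K a).Separable :=
  (X_pow_sub_one_separable_iff.2 hn).of_dvd (minpoly.dvd K a (by simp [ha]))

lemma pow_eq_one_of_mem_spectrum {A : Type*} [Ring A] [Algebra K A] {a : A} {n : ℕ}
    (ha : a ^ n = 1) {μ : K} (hμ : μ ∈ spectrum K a) : μ ^ n = 1 := by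
  cases subsingleton_or_nontrivial A
  · simp [spectrum.of_subsingleton] at hμ
  · simpa [ha] using spectrum.pow_mem_pow a n hμ

lemma minpoly_eq_prod_X_sub_C [IsAlgClosed K] [FiniteDimensional K V] {f : End K V}
    (hf : (minpoly K f).Separable) {s : Finset K} (hs : spectrum K f = s) :
    minpoly K f = ∏ μ ∈ s, (X - C μ) := by
  have hmonic : (minpoly K f).Monic := minpoly.monic (Algebra.IsIntegral.isIntegral f)
  have hroots : (minpoly K f).roots = s.val := by
    refine (Multiset.Nodup.ext (nodup_roots hf) s.nodup).2 fun μ ↦ ?_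
    rw [mem_roots hmonic.ne_zero, ← End.hasEigenvalue_iff_isRoot,
      End.hasEigenvalue_iff_mem_spectrum, hs, Finset.mem_coe, Finset.mem_def]
  rw [(IsAlgClosed.splits _).eq_prod_roots_of_monic hmonic, hroots]
  rfl

lemma pow_eq_one_of_forall_mem_spectrum [IsAlgClosed K] [FiniteDimensional K V] {f : End K V}
    (hf : (minpoly K f).Separable) {m : ℕ} (hm : ∀ μ ∈ spectrum K f, μ ^ m = 1) : f ^ m = 1 := by
  have hfin : (spectrum K f).Finite := End.finite_spectrum f
  have hdvd : minpoly K f ∣ X ^ m - 1 := by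
    rw [minpoly_eq_prod_X_sub_C hf hfin.coe_toFinset.symm]
    refine Finset.prod_dvd_of_coprime
      ((pairwise_coprime_X_sub_C Function.injective_id).set_pairwise _) fun μ hμ ↦ ?_
    simp [dvd_iff_isRoot, hm μ (hfin.mem_toFinset.1 hμ)]
  simpa [sub_eq_zero] using aeval_eq_zero_of_dvd_aeval_eq_zero hdvd (minpoly.aeval K f)

lemma natDegree_minpoly_eq_ncard_spectrum [IsAlgClosed K] [FiniteDimensional K V] {f : End K V}
    (hf : (minpoly K f).Separable) : (minpoly K f).natDegree = (spectrum K f).ncard := by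
  have hfin : (spectrum K f).Finite := End.finite_spectrum f
  rw [minpoly_eq_prod_X_sub_C hf hfin.coe_toFinset.symm, natDegree_finsetProd_X_sub_C_eq_card,
    Set.ncard_eq_toFinset_card _ hfin]

lemma charpoly_eq_prod_X_sub_C [FiniteDimensional K V] {f : End K V} {s : Finset K}
    (hs : spectrum K f = s) (hcard : s.card = finrank K V) :
    f.charpoly = ∏ μ ∈ s, (X - C μ) := by
  refine eq_of_monic_of_dvd_of_natDegree_le (monic_prod_X_sub_C _ _) f.charpoly_monic ?_ ?_
  · refine Finset.prod_dvd_of_coprime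
      ((pairwise_coprime_X_sub_C Function.injective_id).set_pairwise _) fun μ hμ ↦ ?_
    rw [dvd_iff_isRoot, ← End.hasEigenvalue_iff_isRoot_charpoly,
      End.hasEigenvalue_iff_mem_spectrum, hs]
    exact hμ
  · rw [f.charpoly_natDegree, natDegree_finsetProd_X_sub_C_eq_card, hcard]

lemma det_eq_prod_of_card_eq_finrank [FiniteDimensional K V] {f : End K V} {s : Finset K}
    (hs : spectrum K f = s) (hcard : s.card = finrank K V) : f.det = ∏ μ ∈ s, μ := by
  rw [f.det_eq_sign_charpoly_coeff, charpoly_eq_prod_X_sub_C hs hcard, coeff_zero_eq_eval_zero,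
    eval_prod, ← hcard]
  simp [← Finset.prod_const, ← Finset.prod_mul_distrib]

lemma natDegree_minpoly_le_finrank [FiniteDimensional K V] (f : End K V) :
    (minpoly K f).natDegree ≤ finrank K V :=
  f.charpoly_natDegree ▸ natDegree_le_of_dvd f.minpoly_dvd_charpoly f.charpoly_monic.ne_zero

lemma eq_neg_det_of_sq_eq_algebraMap (hV : finrank K V = 2) {f : End K V} {c : K}
    (hsq : f ^ 2 = algebraMap K _ c) (hf : ∀ a, f ≠ algebraMap K _ a) : c = -f.det := by
  have : FiniteDimensional K V := .of_finrank_pos (hV ▸ two_pos)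
  have : Nontrivial V := nontrivial_of_finrank_pos (R := K) (hV ▸ two_pos)
  set τ := f.charpoly.coeff 1
  have hmonic := f.charpoly_monic
  have hcayley : c • 1 + τ • f + f.det • 1 = 0 := by
    have h := aeval_eq_of_monic_of_natDegree_eq_two hmonic (f.charpoly_natDegree.trans hV) f
    rw [f.aeval_self_charpoly, hsq] at h
    rw [h, f.det_eq_sign_charpoly_coeff, hV, Algebra.algebraMap_eq_smul_one]
    simp [τ]
  have hτ : τ = 0 := by
    by_contra hτ
    refine hf (τ⁻¹ * -(c + f.det)) ?_
    have hτf : τ • f = -(c + f.det) • 1 := by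
      rw [neg_smul, eq_neg_iff_add_eq_zero, ← hcayley, add_smul]
      abel
    rw [Algebra.algebraMap_eq_smul_one, mul_smul, ← hτf, inv_smul_smul₀ hτ]
  rw [hτ, zero_smul, add_zero, ← add_smul] at hcayley
  exact eq_neg_of_add_eq_zero_left ((smul_eq_zero.1 hcayley).resolve_right one_ne_zero)

theorem exists_mem_invtSubmodule_finrank_le_two [IsAlgClosed K] [FiniteDimensional K V]
    [Nontrivial V] {A B : End K V} (hAB : IsUnit (A * B)) {s p s' p' : K}
    (hA : A ^ 2 = s • A + p • 1) (hB : B ^ 2 = s' • B + p' • 1) :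
    ∃ W : Submodule K V, W ≠ ⊥ ∧ W ∈ A.invtSubmodule ∧ W ∈ B.invtSubmodule ∧ finrank K W ≤ 2 := by
  obtain ⟨μ, hμ⟩ := End.exists_eigenvalue (A * B)
  obtain ⟨v, hv⟩ := hμ.exists_hasEigenvector
  have hμ0 : μ ≠ 0 := spectrum.ne_zero_of_mem_of_unit (a := hAB.unit) hμ.mem_spectrum
  have hABv : A (B v) = μ • v := hv.apply_eq_smul
  have hBBv : B (B v) = s' • B v + p' • v := congr($hB v)
  have hAv : A v = s • v + (μ⁻¹ * p) • B v := by
    have h : A (A (B v)) = s • A (B v) + p • B v := congr($hA (B v))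
    rw [hABv, map_smul] at h
    rw [← inv_smul_smul₀ hμ0 (A v), h, smul_add, smul_comm s, inv_smul_smul₀ hμ0, smul_smul]
  set W := Submodule.span K {v, B v}
  have hvmem : v ∈ W := Submodule.subset_span (.inl rfl)
  have hBvmem : B v ∈ W := Submodule.subset_span (.inr rfl)
  refine ⟨W, ?_, ?_, ?_, ?_⟩
  · exact Submodule.ne_bot_iff _ |>.2 ⟨v, hvmem, hv.2⟩
  · refine Submodule.span_le.2 (Set.pair_subset ?_ ?_)
    · exact Submodule.mem_comap.2 (hAv ▸ W.add_mem (W.smul_mem _ hvmem) (W.smul_mem _ hBvmem))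
    · exact Submodule.mem_comap.2 (hABv ▸ W.smul_mem _ hvmem)
  · refine Submodule.span_le.2 (Set.pair_subset ?_ ?_)
    · exact hBvmem
    · exact Submodule.mem_comap.2 (hBBv ▸ W.add_mem (W.smul_mem _ hBvmem) (W.smul_mem _ hvmem))
  · classical
    have h := finrank_span_finset_le_card (R := K) {v, B v}
    rw [Finset.coe_pair] at h
    exact h.trans Finset.card_le_two

end LinearAlgebra

section IrreducibleRepresentations

variable {K V G : Type*} [Field K] [AddCommGroup V] [Module K V]

lemma IsIrreducibleRep.isIrreducible {G V : Type} [Group G] [AddCommGroup V] [Module ℂ V]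
    {ρ : Representation ℂ G V} (hρ : IsIrreducibleRep ρ) : ρ.IsIrreducible := by
  have := hρ.1
  exact {
    exists_pair_ne := ⟨⊥, ⊤, fun h ↦ bot_ne_top (congrArg Subrepresentation.toSubmodule h)⟩
    eq_bot_or_eq_top := fun W ↦
      (hρ.2 W.toSubmodule fun g ↦ Submodule.map_le_iff_le_comap.2 (W.apply_mem_toSubmodule g)).imp
        (Subrepresentation.toSubmodule_injective ·) (Subrepresentation.toSubmodule_injective ·) }

section Irreducible

variable [Monoid G]

lemma nontrivial_of_isIrreducible (ρ : Representation K G V) [ρ.IsIrreducible] : Nontrivial V := by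
  by_contra h
  rw [not_nontrivial_iff_subsingleton] at h
  exact bot_ne_top (α := Subrepresentation ρ)
    (Subrepresentation.toSubmodule_injective (Subsingleton.elim _ _))

variable {ρ : Representation K G V} [ρ.IsIrreducible]

lemma eq_top_of_forall_mem_invtSubmodule {s : Set G} (hs : Submonoid.closure s = ⊤)
    {W : Submodule K V} (hW : W ≠ ⊥) (hinv : ∀ g ∈ s, W ∈ End.invtSubmodule (ρ g)) : W = ⊤ := by
  have hmem (g : G) : ∀ v ∈ W, ρ g v ∈ W := by
    induction hs ▸ Submonoid.mem_top g using Submonoid.closure_induction with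
    | mem g hg => exact hinv g hg
    | one => simp
    | mul g h _ _ hg hh => exact fun v hv ↦ by simpa using hg _ (hh v hv)
  have h := eq_bot_or_eq_top (⟨W, fun g v ↦ hmem g v⟩ : Subrepresentation ρ)
  exact congrArg Subrepresentation.toSubmodule
    (h.resolve_left fun h ↦ hW (congrArg Subrepresentation.toSubmodule h))

lemma exists_eq_algebraMap_of_commute [IsAlgClosed K] [FiniteDimensional K V] {s : Set G}
    (hs : Submonoid.closure s = ⊤) {f : End K V} (hf : ∀ g ∈ s, Commute f (ρ g)) :
    ∃ c : K, f = algebraMap K _ c := by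
  have hcomm (g : G) : Commute f (ρ g) := by
    induction hs ▸ Submonoid.mem_top g using Submonoid.closure_induction with
    | mem g hg => exact hf g hg
    | one => simp
    | mul g h _ _ hg hh => exact map_mul ρ g h ▸ hg.mul_right hh
  obtain ⟨c, hc⟩ :=
    Representation.IsIrreducible.algebraMap_intertwiningMap_bijective_of_isAlgClosed.surjective
      (⟨f, hcomm⟩ : ρ.IntertwiningMap ρ)
  exact ⟨c, congrArg Representation.IntertwiningMap.toLinearMap hc.symm⟩

end Irreducible

lemma semiconjBy_of_braid {M : Type*} [Monoid M] {x y : M} (hxy : x * y * x = y * x * y) :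
    SemiconjBy (x * y * x) x y := by
  have h : x * y * x * x = y * x * y * x := congr($hxy * x)
  simpa only [SemiconjBy, mul_assoc] using h

section Braid

variable [IsAlgClosed K] [FiniteDimensional K V] [Group G] {ρ : Representation K G V}
  [ρ.IsIrreducible] {x y : G}

theorem finrank_eq_two_of_braid (hxy : x * y * x = y * x * y)
    (hgen : Submonoid.closure {x, y} = ⊤) (hx : (minpoly K (ρ x)).natDegree = 2) :
    finrank K V = 2 := by
  have := nontrivial_of_isIrreducible ρ
  obtain ⟨s, p, hA⟩ : ∃ s p : K, ρ x ^ 2 = s • ρ x + p • 1 :=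
    ⟨_, _, sq_eq_of_natDegree_minpoly_eq_two hx⟩
  have hconj : SemiconjBy (ρ (x * y * x)) (ρ x) (ρ y) := (semiconjBy_of_braid hxy).map ρ
  have hB : ρ y ^ 2 = s • ρ y + p • 1 := by
    refine ((Group.isUnit (x * y * x)).map ρ).mul_right_cancel ?_
    rw [← (hconj.pow_right 2).eq, hA, mul_add, add_mul, mul_smul_comm, mul_smul_comm, hconj.eq,
      smul_mul_assoc, smul_mul_assoc, mul_one, one_mul]
  have hunit : IsUnit (ρ x * ρ y) := map_mul ρ x y ▸ (Group.isUnit (x * y)).map ρ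
  obtain ⟨W, hW, hAW, hBW, hrank⟩ := exists_mem_invtSubmodule_finrank_le_two hunit hA hB
  have htop : W = ⊤ := eq_top_of_forall_mem_invtSubmodule (ρ := ρ) hgen hW <| by
    rintro g (rfl | rfl) <;> assumption
  rw [htop, finrank_top] at hrank
  exact hrank.antisymm (hx ▸ natDegree_minpoly_le_finrank (ρ x))

lemma ne_algebraMap_of_braid (hxy : x * y * x = y * x * y)
    (hgen : Submonoid.closure {x, y} = ⊤) (hx : (minpoly K (ρ x)).natDegree ≠ 1) (c : K) :
    ρ (x * y * x) ≠ algebraMap K _ c := by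
  intro hc
  have := nontrivial_of_isIrreducible ρ
  have hρxy : ρ x = ρ y := by
    refine ((Group.isUnit (x * y * x)).map ρ).mul_left_cancel ?_
    rw [((semiconjBy_of_braid hxy).map ρ).eq, hc, Algebra.commutes]
  obtain ⟨a, ha⟩ := exists_eq_algebraMap_of_commute (ρ := ρ) (f := ρ x) hgen <| by
    rintro g (rfl | rfl)
    exacts [.refl _, hρxy ▸ .refl _]
  exact hx (by rw [ha, minpoly.eq_X_sub_C, Polynomial.natDegree_X_sub_C])

theorem map_sq_eq_algebraMap_of_braid (hxy : x * y * x = y * x * y)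
    (hgen : Submonoid.closure {x, y} = ⊤) (hx : (minpoly K (ρ x)).natDegree = 2) :
    ρ (x * y * x) ^ 2 = algebraMap K _ (-(ρ x).det ^ 3) := by
  have hwx : SemiconjBy (x * y * x) x y := semiconjBy_of_braid hxy
  have hwy : SemiconjBy (x * y * x) y x := hxy ▸ semiconjBy_of_braid hxy.symm
  obtain ⟨c, hc⟩ := exists_eq_algebraMap_of_commute (ρ := ρ) (f := ρ (x * y * x) ^ 2) hgen <| by
    rw [← map_pow, pow_two]
    rintro g (rfl | rfl)
    exacts [(hwy.mul_left hwx).map ρ, (hwx.mul_left hwy).map ρ]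
  have hdet_y : (ρ y).det = (ρ x).det := by
    have h := congrArg LinearMap.det (hwx.map ρ).eq
    rw [LinearMap.det.map_mul, LinearMap.det.map_mul, mul_comm] at h
    exact (((Group.isUnit (x * y * x)).map ρ).map LinearMap.det).mul_right_cancel h.symm
  have hdet : (ρ (x * y * x)).det = (ρ x).det ^ 3 := by
    rw [map_mul, map_mul, map_mul, map_mul, hdet_y]
    ring
  rw [hc, ← hdet, eq_neg_det_of_sq_eq_algebraMap (finrank_eq_two_of_braid hxy hgen hx) hc
    (ne_algebraMap_of_braid hxy hgen (hx.trans_ne (by norm_num)))]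

lemma det_pow_six_eq_one_of_braid (hxy : x * y * x = y * x * y)
    (hgen : Submonoid.closure {x, y} = ⊤) (hw : (x * y * x) ^ 4 = 1)
    (hx : (minpoly K (ρ x)).natDegree = 2) : (ρ x).det ^ 6 = 1 := by
  have := nontrivial_of_isIrreducible ρ
  have h : algebraMap K (End K V) ((-(ρ x).det ^ 3) ^ 2) = 1 := by
    rw [map_pow, ← map_sq_eq_algebraMap_of_braid hxy hgen hx, ← pow_mul, ← map_pow, hw,
      map_one]
  rw [← map_one (algebraMap K (End K V)), (algebraMap K _).injective.eq_iff] at h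
  linear_combination h

end Braid

section SL2

variable [IsAlgClosed K] [FiniteDimensional K V] {n : ℕ} [NeZero n] [IsLocalRing (ZMod n)]
  {ρ : Representation K (SL2 n) V} [ρ.IsIrreducible]

lemma finrank_eq_two_of_natDegree_minpoly_tGen (ht : (minpoly K (ρ (tGen n))).natDegree = 2) :
    finrank K V = 2 :=
  finrank_eq_two_of_braid (tGen_braid_uGen n) (closure_tGen_uGen n) ht

lemma det_tGen_pow_gcd_six (ht : (minpoly K (ρ (tGen n))).natDegree = 2) :
    (ρ (tGen n)).det ^ Nat.gcd 6 n = 1 := by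
  refine pow_gcd_eq_one.2 ⟨?_, ?_⟩
  · exact det_pow_six_eq_one_of_braid (tGen_braid_uGen n) (closure_tGen_uGen n)
      (tGen_mul_uGen_mul_tGen_pow_four n) ht
  · rw [← map_pow, ← map_pow, tGen_pow_self, map_one, map_one]

end SL2

end IrreducibleRepresentations

section RootsOfUnity

variable {F : Type*} [Field F] {z a b : F}

lemma pow_four_eq_neg_one_of_isPrimitiveRoot (hz : IsPrimitiveRoot z 8) : z ^ 4 = -1 :=
  (hz.pow (by norm_num) (rfl : 8 = 4 * 2)).eq_neg_one_of_two_right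

lemma eq_pow_of_isPrimitiveRoot_eight (hz : IsPrimitiveRoot z 8) (ha : IsPrimitiveRoot a 8) :
    a = z ∨ a = z ^ 3 ∨ a = z ^ 5 ∨ a = z ^ 7 := by
  obtain ⟨i, hi, hcop, rfl⟩ := hz.isPrimitiveRoot_iff.1 ha
  have hi' : i = 1 ∨ i = 3 ∨ i = 5 ∨ i = 7 := by
    interval_cases i <;> revert hcop <;> decide
  rcases hi' with rfl | rfl | rfl | rfl <;> simp

lemma pair_eq_of_sq_mul_eq_one (hz : IsPrimitiveRoot z 8) (ha : IsPrimitiveRoot a 8)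
    (hab : (a * b) ^ 2 = 1) :
    ({a, b} : Set F) = {z, z ^ 3} ∨ ({a, b} : Set F) = {z, z ^ 7} ∨
      ({a, b} : Set F) = {z ^ 3, z ^ 5} ∨ ({a, b} : Set F) = {z ^ 5, z ^ 7} := by
  have hb : b = a ^ 3 ∨ b = a ^ 7 := by
    rcases sq_eq_one_iff.1 hab with h | h
    · exact .inr (by linear_combination a ^ 7 * h - b * ha.pow_eq_one)
    · have ha4 := pow_four_eq_neg_one_of_isPrimitiveRoot ha
      exact .inl (by linear_combination b * ha4 - a ^ 3 * h)
  have hmod (k : ℕ) : z ^ k = z ^ (k % 8) := pow_eq_pow_mod k hz.pow_eq_one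
  rcases eq_pow_of_isPrimitiveRoot_eight hz ha with rfl | rfl | rfl | rfl <;>
    rcases hb with rfl | rfl <;>
    simp [← pow_mul, hmod 9, hmod 15, hmod 21, hmod 35, hmod 49, Set.pair_comm]

end RootsOfUnity

/-- If `ρ` is an irreducible finite-dimensional complex representation of `SL(2, ℤ/8ℤ)`
that does not factor through `SL(2, ℤ/4ℤ)` and `ρ(t)` has exactly two distinct eigenvalues,
then `ρ` is two-dimensional with `t`-spectrum one of `{ζ₈, ζ₈³}`, `{ζ₈, ζ₈⁷}`,
`{ζ₈³, ζ₈⁵}`, `{ζ₈⁵, ζ₈⁷}`. -/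
theorem stmt9
    (V : Type) [AddCommGroup V] [Module ℂ V] [FiniteDimensional ℂ V]
    (ρ : Representation ℂ (SL2 8) V)
    (hirr : IsIrreducibleRep ρ)
    (hnf : ¬ ∃ ρ' : Representation ℂ (SL2 4) V,
      ρ = ρ'.comp (Matrix.SpecialLinearGroup.map
        (ZMod.castHom (by norm_num : (4:ℕ) ∣ 8) (ZMod 4))))
    (h2 : (spectrum ℂ (ρ (tGen 8))).ncard = 2) :
    Module.finrank ℂ V = 2 ∧
      (spectrum ℂ (ρ (tGen 8)) = {ζ 8, ζ 8 ^ 3} ∨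
       spectrum ℂ (ρ (tGen 8)) = {ζ 8, ζ 8 ^ 7} ∨
       spectrum ℂ (ρ (tGen 8)) = {ζ 8 ^ 3, ζ 8 ^ 5} ∨
       spectrum ℂ (ρ (tGen 8)) = {ζ 8 ^ 5, ζ 8 ^ 7}) := by
  have := hirr.isIrreducible
  have : IsLocalRing (ZMod 8) := isLocalRing_zmod_prime_pow 2 3
  have ht8 : ρ (tGen 8) ^ 8 = 1 := by rw [← map_pow, tGen_pow_self, map_one]
  have hsep := minpoly_separable_of_pow_eq_one (K := ℂ) (by norm_num) ht8
  have hdeg := (natDegree_minpoly_eq_ncard_spectrum hsep).trans h2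
  have hrank := finrank_eq_two_of_natDegree_minpoly_tGen hdeg
  refine ⟨hrank, ?_⟩
  obtain ⟨a, b, hab, hspec⟩ := Set.ncard_eq_two.1 h2
  have hdet : (ρ (tGen 8)).det = a * b := by
    rw [det_eq_prod_of_card_eq_finrank (s := {a, b}) (by simpa using hspec)
      (by rw [Finset.card_pair hab, hrank]), Finset.prod_pair hab]
  have hdet_sq : (a * b) ^ 2 = 1 := hdet ▸ det_tGen_pow_gcd_six hdeg
  have ha4 : a ^ 4 ≠ 1 := by
    refine fun ha ↦ hnf (exists_eq_comp_map_castHom (by norm_num) _ ρ ?_)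
    have hb : b ^ 4 = 1 := by linear_combination ((a * b) ^ 2 + 1) * hdet_sq - b ^ 4 * ha
    exact pow_eq_one_of_forall_mem_spectrum hsep (by simp [hspec, ha, hb])
  have ha8 : a ^ 8 = 1 := pow_eq_one_of_mem_spectrum ht8 (hspec ▸ Set.mem_insert a {b})
  have ha : IsPrimitiveRoot a 8 :=
    .iff_orderOf.2 (orderOf_eq_prime_pow (p := 2) (n := 2) ha4 ha8)
  exact hspec ▸ pair_eq_of_sq_mul_eq_one (Complex.isPrimitiveRoot_exp 8 (by norm_num)) ha hdet_sq
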